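/- Let A be an abelian category and let E = (0 → B → E₁ → ... → Eₙ → A → 0) be an n-extension of A by B. Then the Yoneda class of E is zero in YExtⁿ(A,B) if and only if there exists an (n-1)-extension F = (0 → B → F₁ → ... → F_{n-1} → Eₙ → 0) and a morphism of complexes φ : E → F inducing the identity on B and on Eₙ. -/

import Mathlib

open CategoryTheory Category Limits ZeroObject

universe v u

/-- The data of a sequence `X 0 ⟶ X 1 ⟶ ⋯ ⟶ X (n+1)` in an abelian category;
an `n`-extension of `X (n+1)` by `X 0` when `IsExt` holds. -/
structure PreExt (C : Type u) [Category.{v} C] [Abelian C] (n : ℕ) where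
  X : ℕ → C
  d : ∀ i, X i ⟶ X (i + 1)

namespace PreExt

variable {C : Type u} [Category.{v} C] [Abelian C] {n : ℕ}

/-- `E` is an exact `n`-extension: `0 → X 0 → ⋯ → X (n+1) → 0` is exact. -/
def IsExt (E : PreExt C n) : Prop :=
  Mono (E.d 0) ∧ Epi (E.d n) ∧
    ∀ i, i + 1 ≤ n → ∃ w : E.d i ≫ E.d (i + 1) = 0,
      (ShortComplex.mk (E.d i) (E.d (i + 1)) w).Exact

/-- A morphism of `n`-extensions inducing the identity on both ends. -/
def Ladder (E F : PreExt C n) : Prop :=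
  ∃ (h0 : E.X 0 = F.X 0) (h1 : E.X (n + 1) = F.X (n + 1))
    (φ : ∀ i, E.X i ⟶ F.X i),
    φ 0 = eqToHom h0 ∧ φ (n + 1) = eqToHom h1 ∧
    ∀ i, i ≤ n → E.d i ≫ φ (i + 1) = φ i ≫ F.d i

/-- One step of the Yoneda equivalence relation. -/
def ExtRel (E F : PreExt C n) : Prop := E.IsExt ∧ F.IsExt ∧ Ladder E F

/-- Yoneda equivalence of `n`-extensions: the equivalence relation generated by
morphisms of extensions inducing the identity on both ends. -/
def YEquiv (E F : PreExt C n) : Prop := Relation.EqvGen ExtRel E F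

end PreExt

section Triv

variable {C : Type u} [Category.{v} C] [Abelian C] (n : ℕ)

/-- Objects of the trivial ("split") `n`-extension `0 → B → B → 0 → ⋯ → 0 → A → A → 0`. -/
noncomputable def trivX (A B : C) : ℕ → C :=
  fun i => if i ≤ 1 then B else if n ≤ i then A else 0

/-- The trivial `n`-extension of `A` by `B` (for `2 ≤ n`). -/
noncomputable def trivPreExt (hn : 2 ≤ n) (A B : C) : PreExt C n where
  X := trivX n A B
  d i :=
    if h : i = 0 then eqToHom (by subst h; simp [trivX]) else
    if h' : i = n then eqToHom (by
      subst h'; simp only [trivX]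
      rw [if_neg (by omega), if_pos (by omega), if_neg (by omega), if_pos (by omega)]) else
    0

/-- The Yoneda class of the extension `E` is zero, i.e. `E` is Yoneda equivalent
to the trivial extension. -/
def PreExt.classZero (hn : 2 ≤ n) (E : PreExt C n) : Prop :=
  PreExt.YEquiv E (trivPreExt n hn (E.X (n + 1)) (E.X 0))

end Triv

/-!
The class of an extension `E` is taken in Mathlib's `Ext (E.X (n + 1)) (E.X 0) n`, as the Yoneda
product of the classes of the short exact sequences composing `E`. For `β : E.X 0 ⟶ B'` the product
of this class with `β` vanishes if and only if `E` maps, over `β`, to an extension of zero: one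
obtains such a map by embedding `B'` into an object in which an obstruction in `Ext` of positive
degree dies, and by induction on the length.

For `β = 𝟙`, let `E → H` be such a map. Dropping the final zero of `H` and pulling back along
`E.X n ⟶ H.X n` gives `F`. Pulling back along `E.X (n + 1) ⟶ 0` gives an extension `G` with a
section of its last map, which receives maps from both `E` and the trivial extension.
-/

universe w

section Effacement

open Abelian HomologicalComplex DerivedCategory

variable {C : Type u} [Category.{v} C] [Abelian C]

lemma mono_f_of_quasiIsoAt_of_single {B : C} {m : ℤ} {L : CochainComplex C ℤ}
    (s : (CochainComplex.singleFunctor C m).obj B ⟶ L) [L.IsStrictlyGE m] [QuasiIsoAt s m] :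
    Mono (s.f m) := by
  let K := (CochainComplex.singleFunctor C m).obj B
  have := K.isIso_iCycles m (m + 1) (by simp) rfl
  have := K.isIso_homologyπ (m - 1) m (by simp) rfl
  have := L.isIso_homologyπ (m - 1) m (by simp)
    ((L.isZero_of_isStrictlyGE m (m - 1) (by simp)).eq_of_src _ _)
  have : IsIso (cyclesMap s m) := IsIso.of_isIso_fac_right (homologyπ_naturality s m).symm
  rw [← IsIso.inv_comp_eq (K.iCycles m) |>.mpr (cyclesMap_i s m)]
  infer_instance

lemma exists_mono_Q_map_eq_zero [HasDerivedCategory.{w} C] {A B : C} {l m : ℤ} (hlm : m ≠ l)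
    (f : Q.obj ((CochainComplex.singleFunctor C l).obj A) ⟶
      Q.obj ((CochainComplex.singleFunctor C m).obj B)) :
    ∃ (J : C) (j : B ⟶ J), Mono j ∧ f ≫ Q.map ((CochainComplex.singleFunctor C m).map j) = 0 := by
  -- `J` is the term of degree `m` of the numerator `L` of a left fraction representing `f`.
  obtain ⟨L, _, g, s, hs, rfl⟩ := left_fac_of_isStrictlyGE f m
  have : QuasiIso s := by rwa [isIso_Q_map_iff_quasiIso] at hs
  let t : ((single C (ComplexShape.up ℤ) m).obj B).X m ⟶ L.X m := s.f m
  have : Mono t := mono_f_of_quasiIsoAt_of_single s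
  let j : B ⟶ L.X m := (singleObjXSelf (ComplexShape.up ℤ) m B).inv ≫ t
  let p : L ⟶ (CochainComplex.singleFunctor C m).obj (L.X m) :=
    mkHomToSingle (𝟙 (L.X m)) fun i hi =>
      (L.isZero_of_isStrictlyGE m i (by have : i + 1 = m := hi; lia)).eq_of_src _ _
  have hsp : s ≫ p = (CochainComplex.singleFunctor C m).map j := by
    apply to_single_hom_ext
    have hp : p.f m = (singleObjXSelf _ m (L.X m)).inv := (mkHomToSingle_f _ _).trans (id_comp _)
    have hj : (CochainComplex.singleFunctor C m |>.map j).f m = t ≫ (singleObjXSelf _ m _).inv :=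
      (single_map_f_self _ m j).trans (by simp only [j, assoc, Iso.hom_inv_id_assoc])
    exact (congrArg (t ≫ ·) hp).trans hj.symm
  have hgp : g ≫ p = 0 :=
    to_single_hom_ext ((isZero_single_obj_X _ l A m hlm).eq_of_src _ _)
  refine ⟨L.X m, j, mono_comp _ _, ?_⟩
  rw [← hsp, Q.map_comp, assoc, IsIso.inv_hom_id_assoc, ← Q.map_comp, hgp, Q.map_zero]

lemma exists_mono_comp_mk₀_eq_zero [HasExt.{w} C] {A B : C} {n : ℕ}
    (α : Ext A B (n + 1)) :
    ∃ (J : C) (j : B ⟶ J), Mono j ∧ α.comp (Ext.mk₀ j) (add_zero (n + 1)) = 0 := by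
  let := HasDerivedCategory.standard C
  let e := (singleFunctors C).shiftIso (n + 1) (-(n + 1)) 0 (by lia)
  obtain ⟨J, j, hj, hαj⟩ : ∃ (J : C) (j : B ⟶ J), Mono j ∧
      (α.hom ≫ e.hom.app B) ≫ (singleFunctor C (-(n + 1))).map j = 0 :=
    exists_mono_Q_map_eq_zero (by lia) _
  refine ⟨J, j, hj, Ext.ext ?_⟩
  rw [← Ext.hom_comp_singleFunctor_map_shift, Ext.zero_hom, ← cancel_mono (e.hom.app J),
    assoc, zero_comp, ← hαj, assoc]
  exact congrArg (α.hom ≫ ·) (e.hom.naturality j)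

end Effacement

section ShortExact

open Abelian

variable {C : Type u} [Category.{v} C] [Abelian C]

lemma shortExact_cokernel {X Y : C} (f : X ⟶ Y) [Mono f] :
    (ShortComplex.mk f (cokernel.π f) (cokernel.condition f)).ShortExact where
  exact := ShortComplex.exact_cokernel f

lemma shortExact_cokernelπ_eqToHom {X Y Z : C} (f : X ⟶ Y) [Mono f] (h : cokernel f = Z) :
    (ShortComplex.mk f (cokernel.π f ≫ eqToHom h) (by simp)).ShortExact := by
  subst h
  simpa using shortExact_cokernel f

lemma extClass_cokernel_naturality [HasExt.{w} C] {X Y X' Y' : C} {f : X ⟶ Y} {f' : X' ⟶ Y'}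
    [Mono f] [Mono f'] {a : X ⟶ X'} {b : Y ⟶ Y'} (h : f ≫ b = a ≫ f') :
    (shortExact_cokernel f).extClass.comp (Ext.mk₀ a) (add_zero 1) =
      (Ext.mk₀ (cokernel.map f f' a b h)).comp (shortExact_cokernel f').extClass (zero_add 1) :=
  let τ : ShortComplex.mk f _ (cokernel.condition f) ⟶
      ShortComplex.mk f' _ (cokernel.condition f') :=
    { τ₁ := a, τ₂ := b, τ₃ := cokernel.map f f' a b h,
      comm₁₂ := h.symm, comm₂₃ := (cokernel.π_desc _ _ _).symm }
  (shortExact_cokernel f).extClass_naturality (shortExact_cokernel f') τ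

/-- The pullback of the short complex `S` along a map to its last term. -/
noncomputable abbrev pullbackComplex (S : ShortComplex C) {Z : C} (f : Z ⟶ S.X₃) :
    ShortComplex C :=
  ShortComplex.mk (pullback.lift S.f 0 (by rw [S.zero, zero_comp]) : S.X₁ ⟶ pullback S.g f)
    (pullback.snd S.g f) (pullback.lift_snd ..)

lemma shortExact_pullbackComplex {S : ShortComplex C} (hS : S.ShortExact) {Z : C} (f : Z ⟶ S.X₃) :
    (pullbackComplex S f).ShortExact := by
  have := hS.mono_f
  have := hS.epi_g
  have hfst : (pullbackComplex S f).f ≫ pullback.fst S.g f = S.f := pullback.lift_fst ..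
  have : Mono (pullbackComplex S f).f := mono_of_mono_fac hfst
  refine ⟨ShortComplex.exact_of_f_is_kernel _ (KernelFork.IsLimit.ofι' _ _ fun k hk => ?_)⟩
  have hkf : (k ≫ pullback.fst S.g f) ≫ S.g = 0 := by
    rw [assoc, pullback.condition, reassoc_of% hk, zero_comp]
  refine ⟨hS.exact.lift _ hkf, pullback.hom_ext ?_ ?_⟩
  · rw [assoc, hfst, hS.exact.lift_f]
  · rw [assoc, (pullbackComplex S f).zero, comp_zero, hk]

end ShortExact

section Ext

open Abelian

variable {C : Type u} [Category.{v} C] [Abelian C] [HasExt.{w} C] {n : ℕ}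

lemma ext_comp_mk₀_eq_zero_iff {A B B' : C} (α : Ext A B n) (f : B ⟶ B') [IsIso f] :
    α.comp (Ext.mk₀ f) (add_zero n) = 0 ↔ α = 0 := by
  refine ⟨fun h => ?_, fun h => by rw [h, Ext.zero_comp]⟩
  have := congrArg (fun β => β.comp (Ext.mk₀ (inv f)) (add_zero n)) h
  simpa using this

lemma ext_mk₀_comp_eq_zero_iff {A A' B : C} (f : A' ⟶ A) [IsIso f] (α : Ext A B n) :
    (Ext.mk₀ f).comp α (zero_add n) = 0 ↔ α = 0 := by
  refine ⟨fun h => ?_, fun h => by rw [h, Ext.comp_zero]⟩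
  have := congrArg (fun β => (Ext.mk₀ (inv f)).comp β (zero_add n)) h
  simpa using this

end Ext

namespace PreExt

open Abelian

variable {C : Type u} [Category.{v} C] [Abelian C] {n m : ℕ}

lemma IsExt.comp_eq_zero {E : PreExt C n} (hE : E.IsExt) {i : ℕ} (hi : i + 1 ≤ n) :
    E.d i ≫ E.d (i + 1) = 0 :=
  (hE.2.2 i hi).1

lemma IsExt.exact {E : PreExt C n} (hE : E.IsExt) {i : ℕ} (hi : i + 1 ≤ n) :
    (ShortComplex.mk (E.d i) (E.d (i + 1)) (hE.comp_eq_zero hi)).Exact :=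
  (hE.2.2 i hi).2

/-- Cutting `X 0 ⟶ X 1` off a sequence: `X 1` is replaced by the cokernel of `X 0 ⟶ X 1`, which
becomes the new initial term. -/
noncomputable abbrev tail (E : PreExt C (n + 1)) (w : E.d 0 ≫ E.d 1 = 0) : PreExt C n where
  X
    | 0 => cokernel (E.d 0)
    | i + 1 => E.X (i + 2)
  d
    | 0 => cokernel.desc (E.d 0) (E.d 1) w
    | i + 1 => E.d (i + 2)

lemma IsExt.d_zero_comp {E : PreExt C (n + 1)} (hE : E.IsExt) : E.d 0 ≫ E.d 1 = 0 :=
  hE.comp_eq_zero (Nat.le_add_left 1 n)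

lemma IsExt.tail {E : PreExt C (n + 1)} (hE : E.IsExt) : (E.tail hE.d_zero_comp).IsExt := by
  refine ⟨(hE.exact (i := 0) (by lia)).mono_cokernelDesc, ?_, ?_⟩
  · cases n with
    | zero =>
      have : Epi (E.d 1) := hE.2.1
      exact epi_of_epi_fac (cokernel.π_desc (E.d 0) (E.d 1) hE.d_zero_comp)
    | succ n => exact hE.2.1
  · rintro (_ | i) hi
    · have w : cokernel.desc (E.d 0) (E.d 1) hE.d_zero_comp ≫ E.d 2 = 0 := by
        rw [← cancel_epi (cokernel.π (E.d 0)), cokernel.π_desc_assoc,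
          hE.comp_eq_zero (i := 1) (by lia), comp_zero]
      let φ : ShortComplex.mk (E.d 1) (E.d 2) (hE.comp_eq_zero (by lia)) ⟶
          ShortComplex.mk (cokernel.desc (E.d 0) (E.d 1) hE.d_zero_comp) (E.d 2) w :=
        { τ₁ := cokernel.π (E.d 0), τ₂ := 𝟙 _, τ₃ := 𝟙 _ }
      have : Epi φ.τ₁ := inferInstanceAs (Epi (cokernel.π (E.d 0)))
      have : IsIso φ.τ₂ := inferInstanceAs (IsIso (𝟙 _))
      have : Mono φ.τ₃ := inferInstanceAs (Mono (𝟙 _))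
      exact ⟨w, (ShortComplex.exact_iff_of_epi_of_isIso_of_mono φ).1 (hE.exact (i := 1) (by lia))⟩
    · exact hE.2.2 (i + 2) (by lia)

/-- The canonical projection of `X 1` onto the initial term of the tail. -/
noncomputable def tailπ (E : PreExt C (n + 1)) (w : E.d 0 ≫ E.d 1 = 0) : E.X 1 ⟶ (E.tail w).X 0 :=
  cokernel.π (E.d 0)

lemma tailπ_comp_d (E : PreExt C (n + 1)) (w : E.d 0 ≫ E.d 1 = 0) :
    E.tailπ w ≫ (E.tail w).d 0 = E.d 1 :=
  cokernel.π_desc _ _ _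

instance (E : PreExt C (n + 1)) (w : E.d 0 ≫ E.d 1 = 0) : Epi (E.tailπ w) :=
  inferInstanceAs (Epi (cokernel.π (E.d 0)))

/-- The map induced between the tails by a map of sequences, for which only the commutation of the
first square is required. -/
noncomputable def tailMap {E : PreExt C (n + 1)} {F : PreExt C (m + 1)}
    (wE : E.d 0 ≫ E.d 1 = 0) (wF : F.d 0 ≫ F.d 1 = 0) (φ : ∀ i, E.X i ⟶ F.X i)
    (h : E.d 0 ≫ φ 1 = φ 0 ≫ F.d 0) : ∀ i, (E.tail wE).X i ⟶ (F.tail wF).X i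
  | 0 => cokernel.map (E.d 0) (F.d 0) (φ 0) (φ 1) h
  | i + 1 => φ (i + 2)

lemma tail_d_comp_tailMap {E : PreExt C (n + 1)} {F : PreExt C (m + 1)}
    (wE : E.d 0 ≫ E.d 1 = 0) (wF : F.d 0 ≫ F.d 1 = 0) {φ : ∀ i, E.X i ⟶ F.X i}
    (h : E.d 0 ≫ φ 1 = φ 0 ≫ F.d 0) {i : ℕ}
    (hi : E.d (i + 1) ≫ φ (i + 2) = φ (i + 1) ≫ F.d (i + 1)) :
    (E.tail wE).d i ≫ tailMap wE wF φ h (i + 1) = tailMap wE wF φ h i ≫ (F.tail wF).d i := by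
  cases i with
  | zero => simp [tail, tailMap, ← cancel_epi (cokernel.π (E.d 0)), hi]
  | succ i => exact hi

/-- A sequence with its last map dropped. -/
abbrev init (E : PreExt C (n + 1)) : PreExt C n := ⟨E.X, E.d⟩

lemma IsExt.init {E : PreExt C (n + 1)} (hE : E.IsExt) (hz : IsZero (E.X (n + 2))) :
    E.init.IsExt :=
  ⟨hE.1, (hE.exact le_rfl).epi_f (hz.eq_of_tgt _ _), fun i hi => hE.2.2 i (by lia)⟩

/-- The Yoneda splice of `X ⟶ Y ⟶ H.X 0` with the sequence `H`. -/
abbrev splice {X Y : C} (f : X ⟶ Y) (H : PreExt C n) (p : Y ⟶ H.X 0) : PreExt C (n + 1) where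
  X
    | 0 => X
    | 1 => Y
    | i + 2 => H.X (i + 1)
  d
    | 0 => f
    | 1 => p ≫ H.d 0
    | i + 2 => H.d (i + 1)

lemma IsExt.splice {X Y : C} {f : X ⟶ Y} {H : PreExt C n} (hH : H.IsExt) {p : Y ⟶ H.X 0}
    {w : f ≫ p = 0} (hS : (ShortComplex.mk f p w).ShortExact) : (splice f H p).IsExt := by
  refine ⟨hS.mono_f, ?_, ?_⟩
  · cases n with
    | zero =>
      have : Epi p := hS.epi_g
      have : Epi (H.d 0) := hH.2.1
      exact epi_comp p (H.d 0)
    | succ n => exact hH.2.1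
  · rintro (_ | _ | i) hi
    · have w' : f ≫ p ≫ H.d 0 = 0 := by rw [reassoc_of% w, zero_comp]
      let φ : ShortComplex.mk f p w ⟶ ShortComplex.mk f (p ≫ H.d 0) w' :=
        { τ₁ := 𝟙 _, τ₂ := 𝟙 _, τ₃ := H.d 0 }
      have : Epi φ.τ₁ := inferInstanceAs (Epi (𝟙 _))
      have : IsIso φ.τ₂ := inferInstanceAs (IsIso (𝟙 _))
      have : Mono φ.τ₃ := hH.1
      exact ⟨w', (ShortComplex.exact_iff_of_epi_of_isIso_of_mono φ).1 hS.exact⟩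
    · have w' : (p ≫ H.d 0) ≫ H.d 1 = 0 := by
        rw [assoc, hH.comp_eq_zero (i := 0) (by lia), comp_zero]
      let φ : ShortComplex.mk (p ≫ H.d 0) (H.d 1) w' ⟶
          ShortComplex.mk (H.d 0) (H.d 1) (hH.comp_eq_zero (by lia)) :=
        { τ₁ := p, τ₂ := 𝟙 _, τ₃ := 𝟙 _ }
      have : Epi φ.τ₁ := hS.epi_g
      have : IsIso φ.τ₂ := inferInstanceAs (IsIso (𝟙 _))
      have : Mono φ.τ₃ := inferInstanceAs (Mono (𝟙 _))
      exact ⟨w', (ShortComplex.exact_iff_of_epi_of_isIso_of_mono φ).2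
        (hH.exact (i := 0) (by lia))⟩
    · exact hH.2.2 (i + 1) (by lia)

/-- The map to a splice given by a map out of the tail. -/
abbrev spliceMap {X Y : C} {f : X ⟶ Y} {H : PreExt C m} {p : Y ⟶ H.X 0} {E : PreExt C (n + 1)}
    (w : E.d 0 ≫ E.d 1 = 0) (a : E.X 0 ⟶ X) (b : E.X 1 ⟶ Y) (φ : ∀ i, (E.tail w).X i ⟶ H.X i) :
    ∀ i, E.X i ⟶ (splice f H p).X i
  | 0 => a
  | 1 => b
  | i + 2 => φ (i + 1)

lemma d_comp_spliceMap {X Y : C} {f : X ⟶ Y} {H : PreExt C m} {p : Y ⟶ H.X 0}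
    {E : PreExt C (n + 1)} (w : E.d 0 ≫ E.d 1 = 0) {a : E.X 0 ⟶ X} {b : E.X 1 ⟶ Y}
    {φ : ∀ i, (E.tail w).X i ⟶ H.X i} (hab : E.d 0 ≫ b = a ≫ f)
    (hb : E.tailπ w ≫ φ 0 = b ≫ p) {k : ℕ}
    (hφ : ∀ i ≤ k, (E.tail w).d i ≫ φ (i + 1) = φ i ≫ H.d i) :
    ∀ i ≤ k + 1, E.d i ≫ spliceMap w a b φ (i + 1) =
      spliceMap (f := f) (p := p) w a b φ i ≫ (splice f H p).d i := by
  rintro (_ | _ | i) hi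
  · exact hab
  · change E.d 1 ≫ φ 1 = b ≫ p ≫ H.d 0
    rw [← E.tailπ_comp_d w, assoc, hφ 0 (by lia), reassoc_of% hb]
  · exact hφ (i + 1) (by lia)

/-- A short complex, regarded as a sequence of length one. -/
abbrev ofShortComplex (S : ShortComplex C) : PreExt C 1 where
  X
    | 0 => S.X₁
    | 1 => S.X₂
    | _ + 2 => S.X₃
  d
    | 0 => S.f
    | 1 => S.g
    | _ + 2 => 0

lemma isExt_ofShortComplex {S : ShortComplex C} (hS : S.ShortExact) : (ofShortComplex S).IsExt := by
  refine ⟨hS.mono_f, hS.epi_g, fun i hi => ?_⟩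
  obtain rfl : i = 0 := by lia
  exact ⟨S.zero, hS.exact⟩

lemma exists_map_ofShortComplex {E : PreExt C m} {S : ShortComplex C} {a : E.X 0 ⟶ S.X₁}
    {b : E.X 1 ⟶ S.X₂} {c : E.X 2 ⟶ S.X₃} (hab : E.d 0 ≫ b = a ≫ S.f)
    (hbc : E.d 1 ≫ c = b ≫ S.g) :
    ∃ φ : ∀ i, E.X i ⟶ (ofShortComplex S).X i, φ 0 = a ∧ φ 2 = c ∧
      ∀ i ≤ 1, E.d i ≫ φ (i + 1) = φ i ≫ (ofShortComplex S).d i := by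
  refine ⟨fun | 0 => a | 1 => b | 2 => c | _ + 3 => 0, rfl, rfl, ?_⟩
  rintro (_ | _ | i) hi
  · exact hab
  · exact hbc
  · lia

-- `P` is the pullback of `H` along `φ (n + 2)`; if `H.X (n + 2)` is zero, the last map of `P` is a
-- projection off a product, hence splits.
lemma exists_pullback_factorization {E : PreExt C (m + 1)} {H : PreExt C (n + 1)}
    (hE : E.IsExt) (hH : H.IsExt) (hnm : n ≤ m) {φ : ∀ i, E.X i ⟶ H.X i}
    (hφ : ∀ i ≤ n + 1, E.d i ≫ φ (i + 1) = φ i ≫ H.d i) :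
    ∃ P : PreExt C (n + 1), P.IsExt ∧
      (IsZero (H.X (n + 2)) → ∃ s : P.X (n + 2) ⟶ P.X (n + 1), s ≫ P.d (n + 1) = 𝟙 _) ∧
      ∃ (h0 : H.X 0 = P.X 0) (h1 : E.X (n + 2) = P.X (n + 2)) (a : ∀ i, E.X i ⟶ P.X i),
        a 0 = φ 0 ≫ eqToHom h0 ∧ a (n + 2) = eqToHom h1 ∧
        ∀ i ≤ n + 1, E.d i ≫ a (i + 1) = a i ≫ P.d i := by
  induction n generalizing m with
  | zero =>
    let S := ShortComplex.mk (H.d 0) (H.d 1) hH.d_zero_comp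
    have hS : S.ShortExact :=
      { exact := hH.exact le_rfl, mono_f := hH.1, epi_g := hH.2.1 }
    let b : E.X 1 ⟶ pullback (H.d 1) (φ 2) := pullback.lift (φ 1) (E.d 1) (hφ 1 le_rfl).symm
    have hb : E.d 0 ≫ b = φ 0 ≫ (pullbackComplex S (φ 2)).f := by
      apply pullback.hom_ext
      · rw [assoc, assoc, pullback.lift_fst, pullback.lift_fst, hφ 0 zero_le_one]
      · rw [assoc, assoc, pullback.lift_snd, pullback.lift_snd, comp_zero, hE.d_zero_comp]
    obtain ⟨a, ha0, ha1, ha⟩ := exists_map_ofShortComplex (S := pullbackComplex S (φ 2))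
      (c := 𝟙 (E.X 2)) hb ((comp_id _).trans (pullback.lift_snd ..).symm)
    refine ⟨_, isExt_ofShortComplex (shortExact_pullbackComplex hS (φ 2)),
      fun hz => ⟨pullback.lift 0 (𝟙 _) (hz.eq_of_tgt _ _), pullback.lift_snd ..⟩, rfl, rfl, a,
      ha0.trans (comp_id _).symm, ha1, ha⟩
  | succ n ih =>
    obtain ⟨m, rfl⟩ : ∃ k, m = k + 1 := ⟨m - 1, by lia⟩
    have := hH.1
    obtain ⟨P, hP, hs, h0, h1, a, ha0, ha1, ha⟩ := ih hE.tail hH.tail (by lia)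
      fun i hi => tail_d_comp_tailMap _ _ (hφ 0 (by lia)) (hφ (i + 1) (by lia))
    refine ⟨splice (H.d 0) P (cokernel.π (H.d 0) ≫ eqToHom h0),
      hP.splice (shortExact_cokernelπ_eqToHom _ h0), hs, rfl, h1,
      spliceMap hE.d_zero_comp (φ 0) (φ 1) a, (comp_id _).symm, ha1,
      d_comp_spliceMap _ (hφ 0 (by lia)) ?_ ha⟩
    rw [ha0]
    exact (cokernel.π_desc_assoc ..).trans (assoc ..)

section Trivial

variable (n) (hn : 2 ≤ n) (A B : C)

instance isIso_trivPreExt_d_zero : IsIso ((trivPreExt n hn A B).d 0) := by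
  simp only [trivPreExt, dite_true]
  infer_instance

instance isIso_trivPreExt_d_self : IsIso ((trivPreExt n hn A B).d n) := by
  simp only [trivPreExt, dif_neg (by lia : n ≠ 0), dite_true]
  infer_instance

variable {n}

lemma trivPreExt_d_eq_zero {i : ℕ} (h0 : i ≠ 0) (hi : i ≠ n) : (trivPreExt n hn A B).d i = 0 := by
  simp only [trivPreExt, dif_neg h0, dif_neg hi]
  rfl

lemma isZero_trivPreExt_X {i : ℕ} (h1 : 1 < i) (hi : i < n) :
    IsZero ((trivPreExt n hn A B).X i) := by
  simp only [trivPreExt, trivX, if_neg h1.not_ge, if_neg hi.not_ge]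
  exact isZero_zero C

lemma isExt_trivPreExt : (trivPreExt n hn A B).IsExt := by
  refine ⟨inferInstance, inferInstance, ?_⟩
  rintro (_ | i) hi
  · have h := trivPreExt_d_eq_zero hn A B (i := 1) (by lia) (by lia)
    have : Epi ((trivPreExt n hn A B).d 0) := inferInstance
    exact ⟨by rw [h, comp_zero], (ShortComplex.exact_iff_epi _ h).2 this⟩
  · have h := trivPreExt_d_eq_zero hn A B (i := i + 1) (by lia) (by lia)
    refine ⟨by rw [h, zero_comp], ?_⟩
    obtain rfl | hi' := eq_or_lt_of_le hi
    · exact (ShortComplex.exact_iff_mono _ h).2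
        (inferInstanceAs (Mono ((trivPreExt _ hn A B).d (i + 2))))
    · exact ShortComplex.exact_of_isZero_X₂ _ (isZero_trivPreExt_X hn A B (i := i + 2) (by lia) hi')

lemma ladder_trivPreExt {G : PreExt C n} (hG : G.IsExt) {s : G.X (n + 1) ⟶ G.X n}
    (hs : s ≫ G.d n = 𝟙 _) {A B : C} (hA : A = G.X (n + 1)) (hB : B = G.X 0) :
    Ladder (trivPreExt n hn A B) G := by
  let T := trivPreExt n hn A B
  have h0 : T.X 0 = G.X 0 := by simpa [T, trivPreExt, trivX] using hB
  have h1 : T.X (n + 1) = G.X (n + 1) := by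
    simpa [T, trivPreExt, trivX, (by lia : n ≠ 0)] using hA
  let φ : ∀ i, T.X i ⟶ G.X i :=
    Function.update (Function.update (Function.update (Function.update (fun _ => 0)
      0 (eqToHom h0)) 1 (inv (T.d 0) ≫ eqToHom h0 ≫ G.d 0)) n (T.d n ≫ eqToHom h1 ≫ s))
      (n + 1) (eqToHom h1)
  have hφ0 : φ 0 = eqToHom h0 := by simp [φ, Function.update_of_ne, (by lia : 0 ≠ n)]
  have hφ1 : φ 1 = inv (T.d 0) ≫ eqToHom h0 ≫ G.d 0 := by
    dsimp only [φ]
    rw [Function.update_of_ne (by lia : 1 ≠ n + 1), Function.update_of_ne (by lia : 1 ≠ n),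
      Function.update_self]
  have hφn : φ n = T.d n ≫ eqToHom h1 ≫ s := by simp [φ, Function.update_of_ne]
  have hφn1 : φ (n + 1) = eqToHom h1 := by simp [φ]
  refine ⟨h0, h1, φ, hφ0, hφn1, fun i hi => ?_⟩
  by_cases hi0 : i = 0
  · subst hi0
    rw [hφ0, hφ1, IsIso.hom_inv_id_assoc]
  by_cases hin : i = n
  · subst hin
    rw [hφn1, hφn, assoc, assoc, hs, comp_id]
  rw [trivPreExt_d_eq_zero hn A B hi0 hin, zero_comp]
  by_cases hi1 : i = 1
  · subst hi1
    rw [hφ1, assoc, assoc, hG.comp_eq_zero (i := 0) (by lia), comp_zero, comp_zero]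
  · exact (isZero_trivPreExt_X hn A B (by lia) (by lia)).eq_of_src _ _

end Trivial

section Class

variable [HasExt.{w} C]

/-- The class of the short exact sequence `0 → X 0 → X 1 → (tail).X 0 → 0`. -/
noncomputable def IsExt.headClass {E : PreExt C (n + 1)} (hE : E.IsExt) :
    Ext ((E.tail hE.d_zero_comp).X 0) (E.X 0) 1 :=
  have := hE.1
  (shortExact_cokernel (E.d 0)).extClass

/-- The class of an `n`-extension in `Ext`: the Yoneda product of the classes of the short exact
sequences into which it decomposes. -/
noncomputable def yonedaClass : ∀ {n : ℕ} (E : PreExt C n), E.IsExt → Ext (E.X (n + 1)) (E.X 0) n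
  | 0, E, hE =>
    have := hE.1
    have := hE.2.1
    have := isIso_of_mono_of_epi (E.d 0)
    Ext.mk₀ (inv (E.d 0))
  | _ + 1, E, hE =>
    (yonedaClass (E.tail hE.d_zero_comp) hE.tail).comp hE.headClass rfl

lemma IsExt.headClass_comp_mk₀_d {E : PreExt C (n + 1)} (hE : E.IsExt) :
    hE.headClass.comp (Ext.mk₀ (E.d 0)) (add_zero 1) = 0 :=
  have := hE.1
  (shortExact_cokernel (E.d 0)).extClass_comp

lemma IsExt.mk₀_tailπ_comp_headClass {E : PreExt C (n + 1)} (hE : E.IsExt) :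
    (Ext.mk₀ (E.tailπ hE.d_zero_comp)).comp hE.headClass (zero_add 1) = 0 :=
  have := hE.1
  (shortExact_cokernel (E.d 0)).comp_extClass

lemma IsExt.headClass_naturality {E : PreExt C (n + 1)} {F : PreExt C (m + 1)} (hE : E.IsExt)
    (hF : F.IsExt) {φ : ∀ i, E.X i ⟶ F.X i} (h : E.d 0 ≫ φ 1 = φ 0 ≫ F.d 0) :
    hE.headClass.comp (Ext.mk₀ (φ 0)) (add_zero 1) =
      (Ext.mk₀ (tailMap hE.d_zero_comp hF.d_zero_comp φ h 0)).comp hF.headClass (zero_add 1) :=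
  have := hE.1
  have := hF.1
  extClass_cokernel_naturality h

lemma IsExt.exists_d_comp_eq {E : PreExt C (n + 1)} (hE : E.IsExt) {B : C} {β : E.X 0 ⟶ B}
    (hβ : hE.headClass.comp (Ext.mk₀ β) (add_zero 1) = 0) : ∃ u : E.X 1 ⟶ B, E.d 0 ≫ u = β := by
  have := hE.1
  obtain ⟨x, hx⟩ := Ext.contravariant_sequence_exact₁ (shortExact_cokernel (E.d 0)) B
    (Ext.mk₀ β) (add_zero 1) hβ
  obtain ⟨u, rfl⟩ := Ext.mk₀_bijective _ _ |>.2 x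
  exact ⟨u, Ext.mk₀_bijective _ _ |>.1 (by simpa using hx)⟩

lemma yonedaClass_comp_mk₀ {E : PreExt C (n + 1)} {F : PreExt C (m + 1)} (hE : E.IsExt)
    (hF : F.IsExt) {φ : ∀ i, E.X i ⟶ F.X i} (h : E.d 0 ≫ φ 1 = φ 0 ≫ F.d 0) :
    (E.yonedaClass hE).comp (Ext.mk₀ (φ 0)) (add_zero _) =
      (((E.tail hE.d_zero_comp).yonedaClass hE.tail).comp
        (Ext.mk₀ (tailMap hE.d_zero_comp hF.d_zero_comp φ h 0)) (add_zero n)).comp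
          hF.headClass rfl := by
  rw [yonedaClass, Ext.comp_assoc_of_third_deg_zero, Ext.comp_assoc_of_second_deg_zero,
    hE.headClass_naturality hF h]

lemma yonedaClass_naturality {E F : PreExt C n} (hE : E.IsExt) (hF : F.IsExt)
    {φ : ∀ i, E.X i ⟶ F.X i} (hφ : ∀ i ≤ n, E.d i ≫ φ (i + 1) = φ i ≫ F.d i) :
    (E.yonedaClass hE).comp (Ext.mk₀ (φ 0)) (add_zero n) =
      (Ext.mk₀ (φ (n + 1))).comp (F.yonedaClass hF) (zero_add n) := by
  induction n with
  | zero =>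
    simp only [yonedaClass, Ext.mk₀_comp_mk₀]
    congr 1
    rw [IsIso.inv_comp_eq, ← assoc, IsIso.eq_comp_inv, hφ 0 le_rfl]
  | succ n ih =>
    rw [yonedaClass_comp_mk₀ hE hF (hφ 0 (by lia)), ih hE.tail hF.tail
      fun i hi => tail_d_comp_tailMap _ _ _ (hφ (i + 1) (by lia)),
      Ext.comp_assoc _ _ _ (zero_add n) rfl (by lia)]
    rfl

lemma yonedaClass_comp_mk₀_eq_zero {E : PreExt C (n + 1)} {F : PreExt C n} (hE : E.IsExt)
    (hF : F.IsExt) {φ : ∀ i, E.X i ⟶ F.X i}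
    (hφ : ∀ i ≤ n, E.d i ≫ φ (i + 1) = φ i ≫ F.d i) :
    (E.yonedaClass hE).comp (Ext.mk₀ (φ 0)) (add_zero (n + 1)) = 0 := by
  induction n with
  | zero =>
    have := hF.1
    have := hF.2.1
    have := isIso_of_mono_of_epi (F.d 0)
    have h : φ 0 = E.d 0 ≫ φ 1 ≫ inv (F.d 0) := by
      rw [← assoc, IsIso.eq_comp_inv, hφ 0 le_rfl]
    rw [h, ← Ext.mk₀_comp_mk₀, yonedaClass, Ext.comp_assoc_of_third_deg_zero,
      ← Ext.comp_assoc_of_third_deg_zero hE.headClass, hE.headClass_comp_mk₀_d, Ext.zero_comp,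
      Ext.comp_zero]
  | succ n ih =>
    rw [yonedaClass_comp_mk₀ hE hF (hφ 0 (by lia)), ih hE.tail hF.tail
      fun i hi => tail_d_comp_tailMap _ _ _ (hφ (i + 1) (by lia)), Ext.zero_comp]

lemma yonedaClass_eq_zero_of_section {E : PreExt C (n + 1)} (hE : E.IsExt)
    (s : E.X (n + 2) ⟶ E.X (n + 1)) (hs : s ≫ E.d (n + 1) = 𝟙 _) : E.yonedaClass hE = 0 := by
  rw [yonedaClass]
  induction n with
  | zero =>
    have := hE.tail.1
    have := hE.tail.2.1
    have := isIso_of_mono_of_epi ((E.tail hE.d_zero_comp).d 0)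
    have hinv : inv ((E.tail hE.d_zero_comp).d 0) = s ≫ E.tailπ hE.d_zero_comp :=
      IsIso.inv_eq_of_inv_hom_id (by rw [assoc, tailπ_comp_d, hs])
    rw [yonedaClass, hinv, ← Ext.mk₀_comp_mk₀, Ext.comp_assoc_of_second_deg_zero,
      hE.mk₀_tailπ_comp_headClass, Ext.comp_zero]
  | succ n ih => rw [yonedaClass, ih hE.tail s hs, Ext.zero_comp]

-- Once `i : B ⟶ I` effaces `headClass · β`, the class of the tail pushed out to `cokernel i` lifts
-- to a class `z` on `I`, which is effaced in turn.
lemma IsExt.exists_mono_tail_yonedaClass_comp_mk₀_eq_zero {E : PreExt C (n + 2)} (hE : E.IsExt)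
    {B : C} {β : E.X 0 ⟶ B}
    (hβ : (E.yonedaClass hE).comp (Ext.mk₀ β) (add_zero (n + 2)) = 0) :
    ∃ (J : C) (j : B ⟶ J) (u : E.X 1 ⟶ J) (h : E.d 0 ≫ u = β ≫ j), Mono j ∧
      ((E.tail hE.d_zero_comp).yonedaClass hE.tail).comp
        (Ext.mk₀ (cokernel.map (E.d 0) j β u h)) (add_zero (n + 1)) = 0 := by
  have := hE.1
  obtain ⟨I, i, _, hi⟩ :=
    exists_mono_comp_mk₀_eq_zero (hE.headClass.comp (Ext.mk₀ β) (add_zero 1))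
  obtain ⟨u, hu⟩ : ∃ u : E.X 1 ⟶ I, E.d 0 ≫ u = β ≫ i :=
    hE.exists_d_comp_eq (by
      rwa [← Ext.mk₀_comp_mk₀, ← Ext.comp_assoc_of_third_deg_zero])
  let g := cokernel.map (E.d 0) i β u hu
  let α := (E.tail hE.d_zero_comp).yonedaClass hE.tail
  have hg : (α.comp (Ext.mk₀ g) (add_zero (n + 1))).comp (shortExact_cokernel i).extClass rfl =
      0 := by
    rw [Ext.comp_assoc_of_second_deg_zero, ← extClass_cokernel_naturality hu, ← hβ, yonedaClass,
      Ext.comp_assoc_of_third_deg_zero]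
    rfl
  obtain ⟨z, hz⟩ := Ext.covariant_sequence_exact₃ _ (shortExact_cokernel i) _ rfl hg
  obtain ⟨J, k, _, hk⟩ := exists_mono_comp_mk₀_eq_zero z
  have hc : i ≫ k = 𝟙 B ≫ i ≫ k := (id_comp _).symm
  have hfac : cokernel.map (E.d 0) (i ≫ k) β (u ≫ k) (by rw [reassoc_of% hu]) =
      g ≫ cokernel.map i (i ≫ k) (𝟙 B) k hc := by
    simp [← cancel_epi (cokernel.π (E.d 0)), g]
  refine ⟨J, i ≫ k, u ≫ k, by rw [reassoc_of% hu], mono_comp i k, ?_⟩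
  rw [hfac, ← Ext.mk₀_comp_mk₀, ← Ext.comp_assoc_of_third_deg_zero, ← hz,
    Ext.comp_assoc_of_third_deg_zero, Ext.mk₀_comp_mk₀, cokernel.π_desc, ← Ext.mk₀_comp_mk₀,
    ← Ext.comp_assoc_of_third_deg_zero, hk, Ext.zero_comp]

lemma exists_map_of_yonedaClass_comp_mk₀_eq_zero {E : PreExt C (n + 1)} (hE : E.IsExt)
    {B : C} {β : E.X 0 ⟶ B}
    (hβ : (E.yonedaClass hE).comp (Ext.mk₀ β) (add_zero (n + 1)) = 0) :
    ∃ H : PreExt C (n + 1), H.IsExt ∧ IsZero (H.X (n + 2)) ∧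
      ∃ (h0 : B = H.X 0) (φ : ∀ i, E.X i ⟶ H.X i), φ 0 = β ≫ eqToHom h0 ∧
        ∀ i ≤ n + 1, E.d i ≫ φ (i + 1) = φ i ≫ H.d i := by
  induction n generalizing B with
  | zero =>
    rw [yonedaClass, yonedaClass, Ext.comp_assoc_of_third_deg_zero,
      ext_mk₀_comp_eq_zero_iff] at hβ
    obtain ⟨u, hu⟩ := hE.exists_d_comp_eq hβ
    let S : ShortComplex C := ShortComplex.mk (𝟙 B) (0 : B ⟶ 0) comp_zero
    have hS : S.ShortExact :=
      (ShortComplex.Splitting.ofIsIsoOfIsZero S (inferInstanceAs (IsIso (𝟙 B)))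
        (isZero_zero C)).shortExact
    obtain ⟨φ, hφ0, -, hφ⟩ := exists_map_ofShortComplex (E := E) (S := S) (c := 0)
      (hu.trans (comp_id β).symm) (by rw [comp_zero]; exact comp_zero.symm)
    exact ⟨ofShortComplex S, isExt_ofShortComplex hS, isZero_zero C, rfl, φ,
      hφ0.trans (comp_id β).symm, hφ⟩
  | succ n ih =>
    obtain ⟨J, j, u, hu, _, hJ⟩ := hE.exists_mono_tail_yonedaClass_comp_mk₀_eq_zero hβ
    obtain ⟨H, hH, hz, h0, φ, hφ0, hφ⟩ := ih hE.tail hJ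
    refine ⟨splice j H (cokernel.π j ≫ eqToHom h0), hH.splice (shortExact_cokernelπ_eqToHom j h0),
      hz, rfl, spliceMap hE.d_zero_comp β u φ, (comp_id β).symm,
      d_comp_spliceMap _ hu ?_ hφ⟩
    rw [hφ0]
    exact (cokernel.π_desc_assoc ..).trans (assoc ..)

lemma yonedaClass_trivPreExt (hn : 2 ≤ n) (A B : C) :
    (trivPreExt n hn A B).yonedaClass (isExt_trivPreExt hn A B) = 0 := by
  obtain ⟨n, rfl⟩ : ∃ k, n = k + 1 := ⟨n - 1, by lia⟩
  exact yonedaClass_eq_zero_of_section _ (inv ((trivPreExt (n + 1) hn A B).d (n + 1)))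
    (IsIso.inv_hom_id _)

lemma Ladder.yonedaClass_eq_zero_iff {E F : PreExt C n} (h : E.Ladder F) (hE : E.IsExt)
    (hF : F.IsExt) : E.yonedaClass hE = 0 ↔ F.yonedaClass hF = 0 := by
  obtain ⟨h0, h1, φ, hφ0, hφ1, hφ⟩ := h
  have := yonedaClass_naturality hE hF hφ
  rw [hφ0, hφ1] at this
  rw [← ext_comp_mk₀_eq_zero_iff _ (eqToHom h0), this, ext_mk₀_comp_eq_zero_iff]

lemma YEquiv.yonedaClass_eq_zero_iff {E F : PreExt C n} (h : E.YEquiv F) :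
    (∃ hE : E.IsExt, E.yonedaClass hE = 0) ↔ ∃ hF : F.IsExt, F.yonedaClass hF = 0 := by
  induction h with
  | rel E F h =>
    obtain ⟨hE, hF, h⟩ := h
    simp only [hE, hF, exists_true_left, h.yonedaClass_eq_zero_iff hE hF]
  | refl E => rfl
  | symm E F _ ih => exact ih.symm
  | trans E F G _ _ ih₁ ih₂ => exact ih₁.trans ih₂

lemma classZero_iff_yonedaClass_eq_zero (hn : 2 ≤ n) {E : PreExt C n} (hE : E.IsExt) :
    E.classZero n hn ↔ E.yonedaClass hE = 0 := by
  refine ⟨fun h => ?_, fun h => ?_⟩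
  · obtain ⟨_, h⟩ := h.yonedaClass_eq_zero_iff.2 ⟨_, yonedaClass_trivPreExt hn _ _⟩
    exact h
  · obtain ⟨n, rfl⟩ : ∃ k, n = k + 1 := ⟨n - 1, by lia⟩
    obtain ⟨H, hH, hz, h0, φ, hφ0, hφ⟩ :=
      exists_map_of_yonedaClass_comp_mk₀_eq_zero hE (β := 𝟙 _) (by simpa using h)
    obtain ⟨G, hG, hs, g0, g1, a, ha0, ha1, ha⟩ :=
      exists_pullback_factorization hE hH le_rfl hφ
    obtain ⟨s, hs⟩ := hs hz
    have hEG : E.Ladder G := ⟨h0.trans g0, g1, a, by rw [ha0, hφ0]; simp, ha1, ha⟩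
    have hTG := ladder_trivPreExt hn hG hs g1 (h0.trans g0)
    exact .trans _ G _ (.rel _ _ ⟨hE, hG, hEG⟩)
      (.symm _ _ (.rel _ _ ⟨isExt_trivPreExt hn _ _, hG, hTG⟩))

lemma yonedaClass_eq_zero_iff_exists_map {E : PreExt C (n + 2)} (hE : E.IsExt) :
    E.yonedaClass hE = 0 ↔ ∃ F : PreExt C (n + 1), F.IsExt ∧
      ∃ (h0 : E.X 0 = F.X 0) (h1 : E.X (n + 2) = F.X (n + 2)) (φ : ∀ i, E.X i ⟶ F.X i),
        φ 0 = eqToHom h0 ∧ φ (n + 2) = eqToHom h1 ∧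
          ∀ i ≤ n + 1, E.d i ≫ φ (i + 1) = φ i ≫ F.d i := by
  refine ⟨fun h => ?_, fun ⟨F, hF, h0, _, φ, hφ0, _, hφ⟩ => ?_⟩
  · obtain ⟨H, hH, hz, h0, φ, hφ0, hφ⟩ :=
      exists_map_of_yonedaClass_comp_mk₀_eq_zero hE (β := 𝟙 _) (by simpa using h)
    obtain ⟨F, hF, -, f0, f1, a, ha0, ha1, ha⟩ :=
      exists_pullback_factorization hE (hH.init hz) n.le_succ
        fun i hi => hφ i (by lia)
    exact ⟨F, hF, h0.trans f0, f1, a, by rw [ha0, hφ0]; simp, ha1, ha⟩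
  · have := yonedaClass_comp_mk₀_eq_zero hE hF hφ
    rwa [hφ0, ext_comp_mk₀_eq_zero_iff] at this

end Class

end PreExt

/-- Lemma 3.2 of the paper. Let `𝒜` be an abelian category and
`E = (0 → B → E₁ → ⋯ → Eₙ → A → 0)` an `n`-extension of `A = E.X (n+1)` by
`B = E.X 0`.  Its Yoneda class is zero in `YExtⁿ(A, B)` if and only if there is
an `(n-1)`-extension `F = (0 → B → F₁ → ⋯ → F_{n-1} → Eₙ → 0)` together with a
morphism of complexes `φ : E → F` inducing the identity on `B` and on `Eₙ`. -/
theorem statement0 {C : Type u} [Category.{v} C] [Abelian C]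
    (n : ℕ) (hn : 2 ≤ n) (E : PreExt C n) (hE : E.IsExt) :
    E.classZero n hn ↔
      ∃ F : PreExt C (n - 1), F.IsExt ∧
        ∃ (h0 : E.X 0 = F.X 0) (h1 : E.X n = F.X n)
          (φ : ∀ i, E.X i ⟶ F.X i),
          φ 0 = eqToHom h0 ∧ φ n = eqToHom h1 ∧
          ∀ i, i + 1 ≤ n → E.d i ≫ φ (i + 1) = φ i ≫ F.d i := by
  obtain ⟨n, rfl⟩ : ∃ k, n = k + 2 := ⟨n - 2, by omega⟩
  have := HasExt.standard C
  rw [PreExt.classZero_iff_yonedaClass_eq_zero hn hE,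
    PreExt.yonedaClass_eq_zero_iff_exists_map hE]
  simp only [Nat.add_le_add_iff_right]
  rfl
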